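/- (Theorem 5.2, part 1) Suppose that for every m ∈ ℙ and U ∈ ℝ^s there is a unique row-stochastic matrix P̂(m,U) minimizing H(m,·,U); define Γ_m(U)_i = Σ_j (c_{ij}(m,P̂(m,U)) + U_j) P̂(m,U)_{ij} and (Θ_U(m))_j = Σ_i m_i P̂(m,U)_{ij}. Assume there is γ > 0 such that for all U¹, U² ∈ ℝ^s and m¹, m² ∈ ℙ, Σ_i m¹_i (Γ_{m¹}(U²)_i − Γ_{m²}(U²)_i) + Σ_i m²_i (Γ_{m²}(U¹)_i − Γ_{m¹}(U¹)_i) ≥ γ‖m¹ − m²‖² (Euclidean norm). If (m̄¹, Ū¹, λ̄¹) and (m̄², Ū², λ̄²) are stationary solutions, i.e. Ū^k_i + λ̄^k = Γ_{m̄^k}(Ū^k)_i for all i and m̄^k = Θ_{Ū^k}(m̄^k) for k = 1,2 with λ̄¹, λ̄² ∈ ℝ, then m̄¹ = m̄². -/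

import Mathlib

/-!
Averaging `Γ_m(V)` against `m` gives the optimal social cost `H(m, P̂(m,V), V)`. At a stationary
solution `(m, U, λ)` the matrix `P̂(m,U)` is an admissible competitor for any other `V`; it
transports `m` to itself and has cost `∑ mᵢ Uᵢ + λ` at `U`, so its cost at `V` is `∑ mᵢ Vᵢ + λ`.
Hence `∑ mᵢ Γ_m(V)ᵢ ≤ ∑ mᵢ Vᵢ + λ` (`stationary_sum_Gamma_le`). Applied to each of two stationary
solutions with the `U` of the other, this bounds the two sums in the monotonicity hypothesis by
`λ₁ - λ₂` and `λ₂ - λ₁`, so their total is at most `0` and `γ ‖m₁ - m₂‖² ≤ 0`.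
-/

open Finset

/-- `m` lies in the probability simplex ℙ ⊆ ℝ^s. -/
def IsSimplex {s : ℕ} (m : Fin s → ℝ) : Prop :=
  (∀ i, 0 ≤ m i) ∧ ∑ i, m i = 1

/-- `P` is a row-stochastic s×s matrix (each row in the simplex). -/
def RowStochastic {s : ℕ} (P : Fin s → Fin s → ℝ) : Prop :=
  (∀ i j, 0 ≤ P i j) ∧ ∀ i, ∑ j, P i j = 1

/-- Social cost H(m,P,U) = Σ_{i,j} c_{ij}(m,P) m_i P_{ij} + Σ_{i,j} U_j m_i P_{ij}. -/
def socialCost {s : ℕ}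
    (c : Fin s → Fin s → (Fin s → ℝ) → (Fin s → Fin s → ℝ) → ℝ)
    (m : Fin s → ℝ) (P : Fin s → Fin s → ℝ) (U : Fin s → ℝ) : ℝ :=
  ∑ i, ∑ j, c i j m P * m i * P i j + ∑ i, ∑ j, U j * m i * P i j

/-- Γ_m(U)_i = Σ_j (c_{ij}(m, P̂(m,U)) + U_j) P̂(m,U)_{ij}. -/
def Gamma {s : ℕ}
    (c : Fin s → Fin s → (Fin s → ℝ) → (Fin s → Fin s → ℝ) → ℝ)
    (Phat : (Fin s → ℝ) → (Fin s → ℝ) → (Fin s → Fin s → ℝ))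
    (m U : Fin s → ℝ) (i : Fin s) : ℝ :=
  ∑ j, (c i j m (Phat m U) + U j) * Phat m U i j

/-- (Θ_U(m))_j = Σ_i m_i P̂(m,U)_{ij}. -/
def Theta {s : ℕ}
    (Phat : (Fin s → ℝ) → (Fin s → ℝ) → (Fin s → Fin s → ℝ))
    (U m : Fin s → ℝ) (j : Fin s) : ℝ :=
  ∑ i, m i * Phat m U i j

theorem sum_mul_Gamma {s : ℕ}
    (c : Fin s → Fin s → (Fin s → ℝ) → (Fin s → Fin s → ℝ) → ℝ)
    (Phat : (Fin s → ℝ) → (Fin s → ℝ) → (Fin s → Fin s → ℝ)) (m U : Fin s → ℝ) :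
    ∑ i, m i * Gamma c Phat m U i = socialCost c m (Phat m U) U := by
  simp only [Gamma, socialCost, Finset.mul_sum, ← Finset.sum_add_distrib]
  refine Finset.sum_congr rfl fun i _ => Finset.sum_congr rfl fun j _ => ?_
  ring

/-- Changing `U` to `V` changes the social cost of `P` by the pairing of `V - U` with the
distribution into which `P` transports `m`. -/
theorem socialCost_change {s : ℕ}
    (c : Fin s → Fin s → (Fin s → ℝ) → (Fin s → Fin s → ℝ) → ℝ)
    (m : Fin s → ℝ) (P : Fin s → Fin s → ℝ) (U V : Fin s → ℝ) :
    socialCost c m P V = socialCost c m P U + ∑ j, (V j - U j) * ∑ i, m i * P i j := by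
  have h : ∑ j, (V j - U j) * ∑ i, m i * P i j =
      ∑ i, ∑ j, V j * m i * P i j - ∑ i, ∑ j, U j * m i * P i j := by
    simp only [Finset.mul_sum, ← Finset.sum_sub_distrib]
    rw [Finset.sum_comm]
    refine Finset.sum_congr rfl fun i _ => Finset.sum_congr rfl fun j _ => ?_
    ring
  rw [h, socialCost, socialCost]
  ring

/-- Since `m` has mass one, the ergodic constant enters the average of `U + lam` unweighted. -/
theorem IsSimplex.sum_mul_of_add_const {s : ℕ} {m U G : Fin s → ℝ} {lam : ℝ}
    (hm : IsSimplex m) (h : ∀ i, U i + lam = G i) :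
    ∑ i, m i * G i = ∑ i, m i * U i + lam := by
  simp only [← h, mul_add, Finset.sum_add_distrib, ← Finset.sum_mul, hm.2, one_mul]

/-- The optimal cost at a stationary distribution `m`, for an arbitrary `V`, is at most the cost
of keeping the stationary strategy `P̂(m,U)`. -/
theorem stationary_sum_Gamma_le {s : ℕ}
    {c : Fin s → Fin s → (Fin s → ℝ) → (Fin s → Fin s → ℝ) → ℝ}
    {Phat : (Fin s → ℝ) → (Fin s → ℝ) → (Fin s → Fin s → ℝ)}
    {m U : Fin s → ℝ} {lam : ℝ} (V : Fin s → ℝ)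
    (hm : IsSimplex m) (hP : RowStochastic (Phat m U))
    (hmin : ∀ P, RowStochastic P → socialCost c m (Phat m V) V ≤ socialCost c m P V)
    (hU : ∀ i, U i + lam = Gamma c Phat m U i) (hT : m = Theta Phat U m) :
    ∑ i, m i * Gamma c Phat m V i ≤ ∑ i, m i * V i + lam := by
  have hT' : ∀ j, ∑ i, m i * Phat m U i j = m j := fun j => (congrFun hT j).symm
  have h := hmin _ hP
  rw [← sum_mul_Gamma, socialCost_change c m (Phat m U) U V, ← sum_mul_Gamma,
    hm.sum_mul_of_add_const hU] at h
  simp only [hT', sub_mul, Finset.sum_sub_distrib] at h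
  simp only [mul_comm (m _)] at h ⊢
  linarith

theorem stationary_solutions_same_distribution (s : ℕ) (hs : 1 ≤ s)
    (c : Fin s → Fin s → (Fin s → ℝ) → (Fin s → Fin s → ℝ) → ℝ)
    (Phat : (Fin s → ℝ) → (Fin s → ℝ) → (Fin s → Fin s → ℝ))
    (hPhat : ∀ m U, IsSimplex m →
      RowStochastic (Phat m U) ∧
      (∀ P, RowStochastic P → socialCost c m (Phat m U) U ≤ socialCost c m P U) ∧
      (∀ P, RowStochastic P →
        (∀ Q, RowStochastic Q → socialCost c m P U ≤ socialCost c m Q U) →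
        P = Phat m U))
    (γ : ℝ) (hγ : 0 < γ)
    (hA4 : ∀ U₁ U₂ m₁ m₂ : Fin s → ℝ, IsSimplex m₁ → IsSimplex m₂ →
      γ * ∑ i, (m₁ i - m₂ i) ^ 2 ≤
        ∑ i, m₁ i * (Gamma c Phat m₁ U₂ i - Gamma c Phat m₂ U₂ i) +
          ∑ i, m₂ i * (Gamma c Phat m₂ U₁ i - Gamma c Phat m₁ U₁ i))
    (mBar₁ mBar₂ UBar₁ UBar₂ : Fin s → ℝ) (lamBar₁ lamBar₂ : ℝ)
    (hm₁ : IsSimplex mBar₁) (hm₂ : IsSimplex mBar₂)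
    (hstatU₁ : ∀ i, UBar₁ i + lamBar₁ = Gamma c Phat mBar₁ UBar₁ i)
    (hstatm₁ : mBar₁ = Theta Phat UBar₁ mBar₁)
    (hstatU₂ : ∀ i, UBar₂ i + lamBar₂ = Gamma c Phat mBar₂ UBar₂ i)
    (hstatm₂ : mBar₂ = Theta Phat UBar₂ mBar₂) :
    mBar₁ = mBar₂ := by
  have h₁ := stationary_sum_Gamma_le UBar₂ hm₁ (hPhat mBar₁ UBar₁ hm₁).1
    (hPhat mBar₁ UBar₂ hm₁).2.1 hstatU₁ hstatm₁
  have h₂ := stationary_sum_Gamma_le UBar₁ hm₂ (hPhat mBar₂ UBar₂ hm₂).1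
    (hPhat mBar₂ UBar₁ hm₂).2.1 hstatU₂ hstatm₂
  have h := hA4 UBar₁ UBar₂ mBar₁ mBar₂ hm₁ hm₂
  simp only [mul_sub, Finset.sum_sub_distrib] at h
  rw [hm₁.sum_mul_of_add_const hstatU₂, hm₂.sum_mul_of_add_const hstatU₁] at h
  have hnn : ∀ i ∈ Finset.univ, 0 ≤ (mBar₁ i - mBar₂ i) ^ 2 := fun i _ => sq_nonneg _
  have hle : ∑ i, (mBar₁ i - mBar₂ i) ^ 2 ≤ 0 :=
    nonpos_of_mul_nonpos_right (a := γ) (by linarith) hγ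
  have hz := (Finset.sum_eq_zero_iff_of_nonneg hnn).1 (le_antisymm hle (Finset.sum_nonneg hnn))
  funext i
  exact sub_eq_zero.1 (pow_eq_zero_iff two_ne_zero |>.1 (hz i (Finset.mem_univ i)))
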